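/- The process (M_n^*)_{n≥0} defined by M_0^* = 1 and M_n^* = [∏_{i=1}^n p_{α,β}(X_i;θ̃_{i-1})] / [∏_{i=1}^n p_{α,β}(X_i;θ*)] is a nonnegative supermartingale adapted to the natural filtration (F_n)_{n≥0}: for every n ≥ 1, E_{θ*}[M_n^* | F_{n-1}] ≤ M_{n-1}^* almost surely. -/

import Mathlib

open MeasureTheory ENNReal
open scoped BigOperators Classical

noncomputable section

/-- Division in `ℝ≥0∞` with the convention that the ratio is `0` when the
denominator is `0`. -/
def safeDiv (a b : ℝ≥0∞) : ℝ≥0∞ := if b = 0 then 0 else a / b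

variable {d : ℕ} {π : Fin d → Type*} [∀ i, MeasurableSpace (π i)]

/-- The marginal density on the coordinates in `S`, obtained by integrating a density
out over the coordinates in `[d] \ S` (as a function of the full vector, depending only
on the coordinates in `S`). -/
def marginal (μ : ∀ i, Measure (π i)) (S : Finset (Fin d))
    (f : (∀ i, π i) → ℝ≥0∞) : (∀ i, π i) → ℝ≥0∞ :=
  MeasureTheory.lmarginal μ Sᶜ f

/-- The conditional density of the coordinates in `T1` given the coordinates in `T2`,
with the convention that the ratio is `0` when the denominator is `0`. -/
def condDens (μ : ∀ i, Measure (π i)) (T1 T2 : Finset (Fin d))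
    (f : (∀ i, π i) → ℝ≥0∞) (x : ∀ i, π i) : ℝ≥0∞ :=
  safeDiv (marginal μ (T1 ∪ T2) f x) (marginal μ T2 f x)

/-- `𝕊_d`: the nonempty subsets of `[d]`. -/
abbrev Sd (d : ℕ) := {S : Finset (Fin d) // S.Nonempty}

/-- `𝕋_d`: ordered pairs of disjoint nonempty subsets of `[d]`. -/
abbrev Td (d : ℕ) := {T : Finset (Fin d) × Finset (Fin d) //
  T.1.Nonempty ∧ T.2.Nonempty ∧ Disjoint T.1 T.2}

/-- The individual composite likelihood
`p_{α,β}(x;θ) = ∏_S p_S(x_S;θ)^(α_S/γ) ∏_T p(x_{T←}|x_{T→};θ)^(β_T/γ)`,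
where `f = p(·;θ)` is the joint density. -/
def compLik (μ : ∀ i, Measure (π i)) (α : Sd d → ℝ) (β : Td d → ℝ) (γ : ℝ)
    (f : (∀ i, π i) → ℝ≥0∞) (x : ∀ i, π i) : ℝ≥0∞ :=
  (∏ S : Sd d, marginal μ S.1 f x ^ (α S / γ)) *
  (∏ T : Td d, condDens μ T.1.1 T.1.2 f x ^ (β T / γ))

/-!
The proof writes `M_n^*` as a product of sequential bets: the ratio `p_{α,β}(·;θ) / p_{α,β}(·;θ*)`
has expectation at most one under `p(·;θ*)` for every fixed `θ`, and since `X_n` is independent of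
the past while `θ̃_{n-1}` is determined by it, each new factor can only decrease the conditional
mean. For the expectation bound, the composite ratio is a weighted geometric mean of marginal and
conditional likelihood ratios, so Hölder's inequality reduces it to the individual ratios; these
integrate to at most one by Tonelli's theorem. The convention `a / 0 = 0` makes division
multiplicative on all of `ℝ≥0∞`, so no null set where densities vanish or are infinite is removed.
-/

lemma safeDiv_zero (a : ℝ≥0∞) : safeDiv a 0 = 0 := if_pos rfl

lemma safeDiv_of_ne_zero (a : ℝ≥0∞) {b : ℝ≥0∞} (hb : b ≠ 0) : safeDiv a b = a / b := if_neg hb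

lemma safeDiv_eq_mul_safeDiv_one (a b : ℝ≥0∞) : safeDiv a b = a * safeDiv 1 b := by
  rcases eq_or_ne b 0 with rfl | hb
  · simp only [safeDiv_zero, mul_zero]
  · rw [safeDiv_of_ne_zero a hb, safeDiv_of_ne_zero 1 hb, mul_one_div]

lemma safeDiv_mul_le (a b : ℝ≥0∞) : safeDiv a b * b ≤ a := by
  rcases eq_or_ne b 0 with rfl | hb
  · simp only [mul_zero, zero_le]
  · rw [safeDiv_of_ne_zero a hb, mul_comm]
    exact ENNReal.mul_div_le

lemma safeDiv_safeDiv_mul_le (a b c : ℝ≥0∞) : safeDiv a (safeDiv b c) * b ≤ a * c := by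
  rcases eq_or_ne c 0 with rfl | hc
  · simp only [safeDiv_zero, zero_mul, zero_le]
  rcases eq_or_ne c ∞ with rfl | hc'
  · simp only [safeDiv_of_ne_zero b hc, ENNReal.div_top, safeDiv_zero, zero_mul, zero_le]
  calc safeDiv a (safeDiv b c) * b
      = safeDiv a (safeDiv b c) * safeDiv b c * c := by
        rw [mul_assoc, safeDiv_of_ne_zero b hc, ENNReal.div_mul_cancel hc hc']
    _ ≤ a * c := by gcongr; exact safeDiv_mul_le _ _

lemma safeDiv_mul_mul (a b c e : ℝ≥0∞) :
    safeDiv (a * b) (c * e) = safeDiv a c * safeDiv b e := by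
  rcases eq_or_ne c 0 with rfl | hc
  · simp only [safeDiv_zero, zero_mul]
  rcases eq_or_ne e 0 with rfl | he
  · simp only [safeDiv_zero, mul_zero]
  rw [safeDiv_of_ne_zero _ (mul_ne_zero hc he), safeDiv_of_ne_zero _ hc, safeDiv_of_ne_zero _ he,
    div_eq_mul_inv, div_eq_mul_inv, div_eq_mul_inv, ENNReal.mul_inv (.inl hc) (.inr he),
    mul_mul_mul_comm]

lemma safeDiv_prod {ι : Type*} (s : Finset ι) (a b : ι → ℝ≥0∞) :
    safeDiv (∏ i ∈ s, a i) (∏ i ∈ s, b i) = ∏ i ∈ s, safeDiv (a i) (b i) := by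
  induction s using Finset.cons_induction with
  | empty => simp only [Finset.prod_empty, safeDiv_of_ne_zero 1 one_ne_zero, div_one]
  | cons i s hi ih => simp only [Finset.prod_cons, safeDiv_mul_mul, ih]

lemma safeDiv_rpow_rpow (a b : ℝ≥0∞) {w : ℝ} (hw : 0 ≤ w) :
    safeDiv (a ^ w) (b ^ w) = safeDiv a b ^ w := by
  rcases hw.eq_or_lt with rfl | hw'
  · simp only [ENNReal.rpow_zero, safeDiv_of_ne_zero 1 one_ne_zero, div_one]
  rcases eq_or_ne b 0 with rfl | hb
  · simp only [ENNReal.zero_rpow_of_pos hw', safeDiv_zero]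
  · have hbw : b ^ w ≠ 0 := by simpa [ENNReal.rpow_eq_zero_iff_of_pos hw'] using hb
    rw [safeDiv_of_ne_zero _ hb, safeDiv_of_ne_zero _ hbw, ENNReal.div_rpow_of_nonneg _ _ hw]

lemma measurable_safeDiv {Z : Type*} [MeasurableSpace Z] {a b : Z → ℝ≥0∞}
    (ha : Measurable a) (hb : Measurable b) : Measurable fun z => safeDiv (a z) (b z) :=
  Measurable.ite (hb (measurableSet_singleton 0)) measurable_const (ha.div hb)

section Lmarginal

variable {δ : Type*} [DecidableEq δ] {E : δ → Type*} [∀ i, MeasurableSpace (E i)]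
  (μ : ∀ i, Measure (E i))

lemma lmarginal_mul_of_dependsOn (s : Finset δ) {h g : (∀ i, E i) → ℝ≥0∞}
    (hh : DependsOn h (s : Set δ)ᶜ) (hg : Measurable g) :
    lmarginal μ s (h * g) = h * lmarginal μ s g := by
  ext x
  have h_update : ∀ y, h (Function.updateFinset x s y) = h x := fun y =>
    hh fun i hi => dif_neg hi
  simp only [lmarginal, Pi.mul_apply, h_update]
  exact lintegral_const_mul _ (hg.comp measurable_updateFinset)

lemma measurable_lmarginal_uncurry [∀ i, SigmaFinite (μ i)] (s : Finset δ) {Θ : Type*}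
    [MeasurableSpace Θ] {p : Θ → (∀ i, E i) → ℝ≥0∞} (hp : Measurable (Function.uncurry p)) :
    Measurable fun z : Θ × (∀ i, E i) => lmarginal μ s (p z.1) z.2 := by
  have h_update : Measurable fun q : (Θ × (∀ i, E i)) × (∀ i : s, E i) =>
      (q.1.1, Function.updateFinset q.1.2 s q.2) :=
    measurable_fst.fst.prodMk
      (measurable_updateFinset'.comp (measurable_fst.snd.prodMk measurable_snd))
  exact (hp.comp h_update).lintegral_prod_right'

end Lmarginal

section LikelihoodRatio

variable (μ : ∀ i, Measure (π i))

lemma dependsOn_marginal (S : Finset (Fin d)) (f : (∀ i, π i) → ℝ≥0∞) :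
    DependsOn (marginal μ S f) S := fun _ _ h =>
  lmarginal_congr μ f fun i hi => h i (by simpa using hi)

lemma dependsOn_condDens (A B : Finset (Fin d)) (f : (∀ i, π i) → ℝ≥0∞) :
    DependsOn (condDens μ A B f) ↑(A ∪ B) := fun x y h => by
  simp only [condDens, dependsOn_marginal μ (A ∪ B) f h,
    dependsOn_marginal μ B f fun i hi => h i (Finset.mem_union_right A hi)]

lemma marginal_mul_of_dependsOn (S : Finset (Fin d)) {h g : (∀ i, π i) → ℝ≥0∞}
    (hh : DependsOn h S) (hg : Measurable g) :
    marginal μ S (h * g) = h * marginal μ S g :=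
  lmarginal_mul_of_dependsOn μ Sᶜ (by simpa using hh) hg

variable [∀ i, SigmaFinite (μ i)]

lemma measurable_marginal_uncurry (S : Finset (Fin d)) {Θ : Type*} [MeasurableSpace Θ]
    {p : Θ → (∀ i, π i) → ℝ≥0∞} (hp : Measurable (Function.uncurry p)) :
    Measurable fun z : Θ × (∀ i, π i) => marginal μ S (p z.1) z.2 :=
  measurable_lmarginal_uncurry μ Sᶜ hp

lemma measurable_marginal (S : Finset (Fin d)) {f : (∀ i, π i) → ℝ≥0∞} (hf : Measurable f) :
    Measurable (marginal μ S f) :=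
  hf.lmarginal μ

lemma measurable_condDens (A B : Finset (Fin d)) {f : (∀ i, π i) → ℝ≥0∞} (hf : Measurable f) :
    Measurable (condDens μ A B f) :=
  measurable_safeDiv (measurable_marginal μ _ hf) (measurable_marginal μ _ hf)

lemma lmarginal_marginal_union {A B : Finset (Fin d)} (hAB : Disjoint A B)
    {f : (∀ i, π i) → ℝ≥0∞} (hf : Measurable f) :
    lmarginal μ A (marginal μ (A ∪ B) f) = marginal μ B f := by
  have h_compl : Bᶜ = A ∪ (A ∪ B)ᶜ := by
    rw [Finset.compl_union, Finset.union_inter_distrib_left, Finset.union_compl,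
      Finset.univ_inter, Finset.union_eq_right.2 hAB.le_compl_right]
  have h_disj : Disjoint A (A ∪ B)ᶜ :=
    disjoint_compl_right.mono_left Finset.subset_union_left
  rw [marginal, marginal, h_compl, lmarginal_union μ f hf h_disj]

lemma lmarginal_condDens_le_one {A B : Finset (Fin d)} (hAB : Disjoint A B)
    {f : (∀ i, π i) → ℝ≥0∞} (hf : Measurable f) :
    lmarginal μ A (condDens μ A B f) ≤ 1 := by
  have h_inv : DependsOn (fun x => safeDiv 1 (marginal μ B f x)) (A : Set (Fin d))ᶜ :=
    fun x y h => by
      simp only [dependsOn_marginal μ B f fun i hi => h i (Finset.disjoint_right.1 hAB hi)]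
  have h_condDens : condDens μ A B f =
      (fun x => safeDiv 1 (marginal μ B f x)) * marginal μ (A ∪ B) f := by
    ext x
    rw [condDens, safeDiv_eq_mul_safeDiv_one, Pi.mul_apply, mul_comm]
  rw [h_condDens, lmarginal_mul_of_dependsOn μ A h_inv (measurable_marginal μ _ hf),
    lmarginal_marginal_union μ hAB hf]
  exact fun x => safeDiv_mul_le 1 _

lemma lintegral_withDensity_le_of_marginal_mul_le (S : Finset (Fin d))
    {r f g : (∀ i, π i) → ℝ≥0∞} (hr : Measurable r) (hf : Measurable f) (hg : Measurable g)
    (hle : marginal μ S (r * g) ≤ marginal μ S f) :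
    ∫⁻ x, r x ∂(Measure.pi μ).withDensity g ≤ ∫⁻ x, f x ∂Measure.pi μ := by
  rw [lintegral_withDensity_eq_lintegral_mul _ hg hr, mul_comm]
  exact lintegral_le_of_lmarginal_le Sᶜ (hr.mul hg) hf hle

lemma lintegral_safeDiv_marginal_le (S : Finset (Fin d)) {f g : (∀ i, π i) → ℝ≥0∞}
    (hf : Measurable f) (hg : Measurable g) :
    ∫⁻ x, safeDiv (marginal μ S f x) (marginal μ S g x) ∂(Measure.pi μ).withDensity g
      ≤ ∫⁻ x, f x ∂Measure.pi μ := by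
  have h_dep : DependsOn (fun x => safeDiv (marginal μ S f x) (marginal μ S g x)) S :=
    fun x y h => by simp only [dependsOn_marginal μ S _ h]
  refine lintegral_withDensity_le_of_marginal_mul_le μ S
    (measurable_safeDiv (measurable_marginal μ S hf) (measurable_marginal μ S hg)) hf hg ?_
  rw [marginal_mul_of_dependsOn μ S h_dep hg]
  exact fun x => safeDiv_mul_le _ _

lemma lintegral_safeDiv_condDens_le {A B : Finset (Fin d)} (hAB : Disjoint A B)
    {f g : (∀ i, π i) → ℝ≥0∞} (hf : Measurable f) (hg : Measurable g) :
    ∫⁻ x, safeDiv (condDens μ A B f x) (condDens μ A B g x) ∂(Measure.pi μ).withDensity g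
      ≤ ∫⁻ x, g x ∂Measure.pi μ := by
  set r : (∀ i, π i) → ℝ≥0∞ := fun x => safeDiv (condDens μ A B f x) (condDens μ A B g x)
  have hr : Measurable r :=
    measurable_safeDiv (measurable_condDens μ A B hf) (measurable_condDens μ A B hg)
  have hr_dep : DependsOn r ↑(A ∪ B) := fun x y h => by
    simp only [r, dependsOn_condDens μ A B _ h]
  have hg_dep : DependsOn (marginal μ B g) (A : Set (Fin d))ᶜ :=
    (dependsOn_marginal μ B g).mono fun i hi => Finset.disjoint_right.1 hAB hi
  refine lintegral_withDensity_le_of_marginal_mul_le μ B hr hg hg ?_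
  calc marginal μ B (r * g)
      = lmarginal μ A (r * marginal μ (A ∪ B) g) := by
        rw [← lmarginal_marginal_union μ hAB (hr.mul hg), marginal_mul_of_dependsOn μ _ hr_dep hg]
    _ ≤ lmarginal μ A (marginal μ B g * condDens μ A B f) :=
        lmarginal_mono fun x => (safeDiv_safeDiv_mul_le _ _ _).trans_eq (mul_comm _ _)
    _ = marginal μ B g * lmarginal μ A (condDens μ A B f) :=
        lmarginal_mul_of_dependsOn μ A hg_dep (measurable_condDens μ A B hf)
    _ ≤ marginal μ B g :=
        mul_le_of_le_one_right' (lmarginal_condDens_le_one μ hAB hf)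

end LikelihoodRatio

section CompositeLikelihood

variable (μ : ∀ i, Measure (π i))

/-- The marginal and conditional densities out of which the composite likelihood is built, indexed
jointly by `𝕊_d` and `𝕋_d` so that it becomes a single weighted geometric mean. -/
def compLikFactor (f : (∀ i, π i) → ℝ≥0∞) : Sd d ⊕ Td d → (∀ i, π i) → ℝ≥0∞
  | .inl S => marginal μ S.1 f
  | .inr T => condDens μ T.1.1 T.1.2 f

lemma compLik_eq_prod_compLikFactor (α : Sd d → ℝ) (β : Td d → ℝ) (γ : ℝ)
    (f : (∀ i, π i) → ℝ≥0∞) (x : ∀ i, π i) :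
    compLik μ α β γ f x = ∏ i, compLikFactor μ f i x ^ (Sum.elim α β i / γ) := by
  rw [Fintype.prod_sum_type]
  rfl

lemma safeDiv_compLik {α : Sd d → ℝ} {β : Td d → ℝ} {γ : ℝ}
    (hw : ∀ i, 0 ≤ Sum.elim α β i / γ) (f g : (∀ i, π i) → ℝ≥0∞) (x : ∀ i, π i) :
    safeDiv (compLik μ α β γ f x) (compLik μ α β γ g x) =
      ∏ i, safeDiv (compLikFactor μ f i x) (compLikFactor μ g i x) ^ (Sum.elim α β i / γ) := by
  simp only [compLik_eq_prod_compLikFactor, safeDiv_prod, safeDiv_rpow_rpow _ _ (hw _)]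

variable [∀ i, SigmaFinite (μ i)]

lemma measurable_compLikFactor {f : (∀ i, π i) → ℝ≥0∞} (hf : Measurable f) :
    ∀ i, Measurable (compLikFactor μ f i)
  | .inl _ => measurable_marginal μ _ hf
  | .inr _ => measurable_condDens μ _ _ hf

lemma measurable_compLik_uncurry (α : Sd d → ℝ) (β : Td d → ℝ) (γ : ℝ) {Θ : Type*}
    [MeasurableSpace Θ] {p : Θ → (∀ i, π i) → ℝ≥0∞} (hp : Measurable (Function.uncurry p)) :
    Measurable fun z : Θ × (∀ i, π i) => compLik μ α β γ (p z.1) z.2 := by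
  have h_marginal := fun S => measurable_marginal_uncurry μ S hp
  exact (Finset.measurable_fun_prod _ fun S _ => (h_marginal _).pow_const _).mul
    (Finset.measurable_fun_prod _ fun T _ =>
      (measurable_safeDiv (h_marginal _) (h_marginal _)).pow_const _)

lemma lintegral_safeDiv_compLikFactor_le_one {f g : (∀ i, π i) → ℝ≥0∞} (hf : Measurable f)
    (hf_le : ∫⁻ x, f x ∂Measure.pi μ ≤ 1) (hg : Measurable g)
    (hg_le : ∫⁻ x, g x ∂Measure.pi μ ≤ 1) :
    ∀ i, ∫⁻ x, safeDiv (compLikFactor μ f i x) (compLikFactor μ g i x)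
      ∂(Measure.pi μ).withDensity g ≤ 1
  | .inl S => (lintegral_safeDiv_marginal_le μ S.1 hf hg).trans hf_le
  | .inr T => (lintegral_safeDiv_condDens_le μ T.2.2.2 hf hg).trans hg_le

theorem lintegral_safeDiv_compLik_le_one {α : Sd d → ℝ} {β : Td d → ℝ}
    (hα : ∀ S, 0 ≤ α S) (hβ : ∀ T, 0 ≤ β T)
    {γ : ℝ} (hγ : γ = ∑ S, α S + ∑ T, β T) (hγpos : 0 < γ)
    {f g : (∀ i, π i) → ℝ≥0∞} (hf : Measurable f) (hf_le : ∫⁻ x, f x ∂Measure.pi μ ≤ 1)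
    (hg : Measurable g) (hg_le : ∫⁻ x, g x ∂Measure.pi μ ≤ 1) :
    ∫⁻ x, safeDiv (compLik μ α β γ f x) (compLik μ α β γ g x)
      ∂(Measure.pi μ).withDensity g ≤ 1 := by
  have hw : ∀ i, 0 ≤ Sum.elim α β i / γ := fun i =>
    div_nonneg (Sum.rec hα hβ i) hγpos.le
  have hw_sum : ∑ i, Sum.elim α β i / γ = 1 := by
    rw [← Finset.sum_div, Fintype.sum_sum_type]
    simp only [Sum.elim_inl, Sum.elim_inr, ← hγ, div_self hγpos.ne']
  calc ∫⁻ x, safeDiv (compLik μ α β γ f x) (compLik μ α β γ g x) ∂(Measure.pi μ).withDensity g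
      = ∫⁻ x, ∏ i, safeDiv (compLikFactor μ f i x) (compLikFactor μ g i x) ^
          (Sum.elim α β i / γ) ∂(Measure.pi μ).withDensity g := by
        simp only [safeDiv_compLik μ hw]
    _ ≤ ∏ i, (∫⁻ x, safeDiv (compLikFactor μ f i x) (compLikFactor μ g i x)
          ∂(Measure.pi μ).withDensity g) ^ (Sum.elim α β i / γ) :=
        ENNReal.lintegral_prod_norm_pow_le _
          (fun i _ => (measurable_safeDiv (measurable_compLikFactor μ hf i)
            (measurable_compLikFactor μ hg i)).aemeasurable)
          hw_sum (fun i _ => hw i)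
    _ ≤ 1 := Finset.prod_le_one' fun i _ =>
        ENNReal.rpow_le_one (lintegral_safeDiv_compLikFactor_le_one μ hf hf_le hg hg_le i) (hw i)

end CompositeLikelihood

section SequentialProduct

variable {Ω Θ E : Type*} {mΩ : MeasurableSpace Ω} [MeasurableSpace Θ] [MeasurableSpace E]
  {P : Measure Ω} [IsFiniteMeasure P]

lemma lintegral_mul_le_of_indepFun {W : Ω → ℝ≥0∞} {T : Ω → Θ} {X : Ω → E}
    (hW : Measurable W) (hT : Measurable T) (hX : Measurable X)
    (hindep : ProbabilityTheory.IndepFun (fun ω => (W ω, T ω)) X P)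
    {r : Θ → E → ℝ≥0∞} (hr : Measurable (Function.uncurry r))
    (hr_le : ∀ t, ∫⁻ x, r t x ∂P.map X ≤ 1) :
    ∫⁻ ω, W ω * r (T ω) (X ω) ∂P ≤ ∫⁻ ω, W ω ∂P := by
  have hWT : Measurable fun ω => (W ω, T ω) := hW.prodMk hT
  have hG : Measurable fun z : (ℝ≥0∞ × Θ) × E => z.1.1 * r z.1.2 z.2 :=
    measurable_fst.fst.mul (hr.comp (measurable_fst.snd.prodMk measurable_snd))
  have h_law := (ProbabilityTheory.indepFun_iff_map_prod_eq_prod_map_map hWT.aemeasurable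
    hX.aemeasurable).1 hindep
  calc ∫⁻ ω, W ω * r (T ω) (X ω) ∂P
      = ∫⁻ z, z.1.1 * r z.1.2 z.2 ∂P.map (fun ω => ((W ω, T ω), X ω)) :=
        (lintegral_map hG (hWT.prodMk hX)).symm
    _ = ∫⁻ v, ∫⁻ x, v.1 * r v.2 x ∂P.map X ∂P.map (fun ω => (W ω, T ω)) := by
        rw [h_law, lintegral_prod _ hG.aemeasurable]
    _ = ∫⁻ v, v.1 * ∫⁻ x, r v.2 x ∂P.map X ∂P.map (fun ω => (W ω, T ω)) :=
        lintegral_congr fun v => lintegral_const_mul _ hr.of_uncurry_left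
    _ ≤ ∫⁻ v, v.1 ∂P.map (fun ω => (W ω, T ω)) :=
        lintegral_mono fun v => mul_le_of_le_one_right' (hr_le v.2)
    _ = ∫⁻ ω, W ω ∂P := lintegral_map measurable_fst hWT

lemma supermartingale_toReal_of_setLIntegral_succ_le {𝒢 : Filtration ℕ mΩ} {M : ℕ → Ω → ℝ≥0∞}
    (hM : ∀ n, Measurable[𝒢 n] (M n)) (hM_zero : ∫⁻ ω, M 0 ω ∂P ≠ ∞)
    (hM_succ : ∀ n s, MeasurableSet[𝒢 n] s → ∫⁻ ω in s, M (n + 1) ω ∂P ≤ ∫⁻ ω in s, M n ω ∂P) :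
    Supermartingale (fun n ω => (M n ω).toReal) 𝒢 P := by
  have hM' : ∀ n, Measurable (M n) := fun n => (hM n).mono (𝒢.le n) le_rfl
  have hM_ne_top : ∀ n, ∫⁻ ω, M n ω ∂P ≠ ∞ := by
    intro n
    induction n with
    | zero => exact hM_zero
    | succ n ih => exact ne_top_of_le_ne_top ih (by simpa using hM_succ n .univ .univ)
  have h_integral : ∀ n s, ∫ ω in s, (M n ω).toReal ∂P = (∫⁻ ω in s, M n ω ∂P).toReal :=
    fun n s => integral_toReal (hM' n).aemeasurable
      (ae_restrict_of_ae (ae_lt_top (hM' n) (hM_ne_top n)))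
  refine supermartingale_of_setIntegral_succ_le
    (fun n => (hM n).ennreal_toReal.stronglyMeasurable)
    (fun n => integrable_toReal_of_lintegral_ne_top (hM' n).aemeasurable (hM_ne_top n)) ?_
  intro n s hs
  rw [h_integral, h_integral]
  exact ENNReal.toReal_mono (ne_top_of_le_ne_top (hM_ne_top n) (setLIntegral_le_lintegral s _))
    (hM_succ n s hs)

theorem supermartingale_prod_of_lintegral_le_one {𝒢 : Filtration ℕ mΩ}
    {T : ℕ → Ω → Θ} {X : ℕ → Ω → E} (hT : ∀ n, Measurable[𝒢 n] (T n))
    (hX : ∀ n, Measurable[𝒢 (n + 1)] (X n))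
    (hindep : ∀ n, ProbabilityTheory.Indep (𝒢 n) (MeasurableSpace.comap (X n) inferInstance) P)
    {r : Θ → E → ℝ≥0∞} (hr : Measurable (Function.uncurry r))
    (hr_le : ∀ n t, ∫⁻ x, r t x ∂P.map (X n) ≤ 1) :
    Supermartingale (fun n ω => (∏ i ∈ Finset.range n, r (T i ω) (X i ω)).toReal) 𝒢 P := by
  set M : ℕ → Ω → ℝ≥0∞ := fun n ω => ∏ i ∈ Finset.range n, r (T i ω) (X i ω)
  have hM : ∀ n, Measurable[𝒢 n] (M n) := fun n =>
    Finset.measurable_fun_prod _ fun i hi =>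
      have hin : i < n := Finset.mem_range.1 hi
      hr.comp (((hT i).mono (𝒢.mono hin.le) le_rfl).prodMk ((hX i).mono (𝒢.mono hin) le_rfl))
  refine supermartingale_toReal_of_setLIntegral_succ_le hM (by simp) fun n s hs => ?_
  have hs' : MeasurableSet s := 𝒢.le n s hs
  have h_past : Measurable[𝒢 n] fun ω => (s.indicator (M n) ω, T n ω) :=
    ((hM n).indicator hs).prodMk (hT n)
  have h_past' := h_past.mono (𝒢.le n) le_rfl
  calc ∫⁻ ω in s, M (n + 1) ω ∂P
      = ∫⁻ ω, s.indicator (M n) ω * r (T n ω) (X n ω) ∂P := by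
        simp only [← lintegral_indicator hs', M, Finset.prod_range_succ,
          Set.indicator_mul_left]
    _ ≤ ∫⁻ ω, s.indicator (M n) ω ∂P :=
        lintegral_mul_le_of_indepFun h_past'.fst h_past'.snd ((hX n).mono (𝒢.le _) le_rfl)
          (ProbabilityTheory.indep_of_indep_of_le_left (hindep n) h_past.comap_le) hr (hr_le n)
    _ = ∫⁻ ω in s, M n ω ∂P := lintegral_indicator hs' _

end SequentialProduct

section PastFiltration

variable {Ω E : Type*} {mΩ : MeasurableSpace Ω} [MeasurableSpace E] {X : ℕ → Ω → E}

lemma measurable_comap_fin {n i : ℕ} (hi : i < n) :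
    Measurable[MeasurableSpace.comap (fun ω (j : Fin n) => X j ω) inferInstance] (X i) :=
  (measurable_pi_apply (⟨i, hi⟩ : Fin n)).comp (comap_measurable fun ω (j : Fin n) => X j ω)

/-- The filtration `F_n = σ(X_0, …, X_{n-1})` of the strict past of a sequence; in contrast to
`Filtration.natural`, the variable `X_n` is excluded at time `n`. -/
def pastFiltration (X : ℕ → Ω → E) (hX : ∀ n, Measurable (X n)) : Filtration ℕ mΩ where
  seq n := MeasurableSpace.comap (fun ω (j : Fin n) => X j ω) inferInstance
  mono' _ _ hmn := Measurable.comap_le <|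
    @measurable_pi_lambda _ _ _ (_) _ _ fun j => measurable_comap_fin (j.2.trans_le hmn)
  le' n := (measurable_pi_lambda _ fun j : Fin n => hX j).comap_le

lemma indep_pastFiltration {P : Measure Ω} (hX : ∀ n, Measurable (X n))
    (hindep : ProbabilityTheory.iIndepFun X P) (n : ℕ) :
    ProbabilityTheory.Indep (pastFiltration X hX n)
      (MeasurableSpace.comap (X n) inferInstance) P := by
  have h_tuple : Measurable fun (v : Finset.range n → E) (j : Fin n) =>
      v ⟨j, Finset.mem_range.2 j.2⟩ :=
    measurable_pi_lambda _ fun j => measurable_pi_apply _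
  have h_last : Measurable fun v : ({n} : Finset ℕ) → E => v ⟨n, Finset.mem_singleton_self n⟩ :=
    measurable_pi_apply _
  exact (hindep.indepFun_finset (Finset.range n) {n} (by simp) hX).comp h_tuple h_last

end PastFiltration

theorem running_CL_ratio_supermartingale_general
    {d : ℕ} {π : Fin d → Type*} [∀ i, MeasurableSpace (π i)]
    (μ : ∀ i, Measure (π i)) [∀ i, SigmaFinite (μ i)]
    {Θ : Type*} [MeasurableSpace Θ] {p : Θ → (∀ i, π i) → ℝ≥0∞}
    (hp_meas : Measurable (Function.uncurry p))
    (hp_le : ∀ θ : Θ, ∫⁻ x, p θ x ∂Measure.pi μ ≤ 1)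
    {α : Sd d → ℝ} {β : Td d → ℝ} (hα : ∀ S, 0 ≤ α S) (hβ : ∀ T, 0 ≤ β T)
    {γ : ℝ} (hγ : γ = ∑ S, α S + ∑ T, β T) (hγpos : 0 < γ)
    {Ω : Type*} {mΩ : MeasurableSpace Ω} {Pr : Measure Ω} [IsProbabilityMeasure Pr]
    {𝒢 : Filtration ℕ mΩ} {X : ℕ → Ω → (∀ i, π i)} (hX : ∀ n, Measurable[𝒢 (n + 1)] (X n))
    (hindep : ∀ n, ProbabilityTheory.Indep (𝒢 n) (MeasurableSpace.comap (X n) inferInstance) Pr)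
    {θstar : Θ} (hlaw : ∀ n, Pr.map (X n) = (Measure.pi μ).withDensity (p θstar))
    {θtilde : ℕ → Ω → Θ} (hθtilde : ∀ n, Measurable[𝒢 n] (θtilde n)) :
    Supermartingale (fun n ω => (safeDiv
      (∏ i ∈ Finset.range n, compLik μ α β γ (p (θtilde i ω)) (X i ω))
      (∏ i ∈ Finset.range n, compLik μ α β γ (p θstar) (X i ω))).toReal) 𝒢 Pr := by
  have hp : ∀ θ, Measurable (p θ) := fun θ => hp_meas.of_uncurry_left
  have h_compLik := measurable_compLik_uncurry μ α β γ hp_meas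
  let r : Θ → (∀ i, π i) → ℝ≥0∞ := fun θ x =>
    safeDiv (compLik μ α β γ (p θ) x) (compLik μ α β γ (p θstar) x)
  have hr : Measurable (Function.uncurry r) :=
    measurable_safeDiv h_compLik (h_compLik.comp (measurable_const.prodMk measurable_snd))
  have hr_le : ∀ n θ, ∫⁻ x, r θ x ∂Pr.map (X n) ≤ 1 := fun n θ => by
    rw [hlaw n]
    exact lintegral_safeDiv_compLik_le_one μ hα hβ hγ hγpos (hp θ) (hp_le θ) (hp θstar)
      (hp_le θstar)
  simpa only [safeDiv_prod] using
    supermartingale_prod_of_lintegral_le_one hθtilde hX hindep hr hr_le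

/-- The process `(M_n^*)_{n≥0}` with `M_0^* = 1` and
`M_n^* = ∏_{i=1}^n p_{α,β}(X_i;θ̃_{i-1}) / ∏_{i=1}^n p_{α,β}(X_i;θ*)` is a
nonnegative supermartingale adapted to the natural filtration `(F_n)_{n≥0}`:
it is nonnegative, integrable and adapted, and for every `n ≥ 1`,
`E_{θ*}[M_n^* | F_{n-1}] ≤ M_{n-1}^*` almost surely. -/
theorem running_CL_ratio_supermartingale
    {d : ℕ} (hd : 1 ≤ d)
    {π : Fin d → Type*} [∀ i, MeasurableSpace (π i)]
    (μ : ∀ i, Measure (π i)) [∀ i, SigmaFinite (μ i)]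
    {Θ : Type*} [MeasurableSpace Θ]
    (p : Θ → (∀ i, π i) → ℝ≥0∞)
    (hp_meas : Measurable (Function.uncurry p))
    (hp_prob : ∀ θ : Θ, ∫⁻ x, p θ x ∂(Measure.pi μ) = 1)
    (α : Sd d → ℝ) (β : Td d → ℝ)
    (hα : ∀ S, 0 ≤ α S) (hβ : ∀ T, 0 ≤ β T)
    (γ : ℝ) (hγ : γ = ∑ S, α S + ∑ T, β T) (hγpos : 0 < γ)
    {Ω : Type*} [MeasurableSpace Ω]
    (Pr : Measure Ω) [IsProbabilityMeasure Pr]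
    (θstar : Θ)
    -- `X 0, X 1, X 2, …` is the i.i.d. sequence `X_1, X_2, …` (0-indexed),
    -- each observation having density `p(·;θ*)` with respect to `μ`
    (X : ℕ → Ω → (∀ i, π i))
    (hX : ∀ i, Measurable (X i))
    (hiid : ProbabilityTheory.iIndepFun X Pr)
    (hlaw : ∀ i, Measure.map (X i) Pr = (Measure.pi μ).withDensity (p θstar))
    -- the natural filtration `F n = σ(X_1,…,X_n)` (so `F 0` is trivial)
    (F : ℕ → MeasurableSpace Ω)
    (hF : ∀ n, F n = MeasurableSpace.comap (fun ω => fun j : Fin n => X j ω)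
      (inferInstance : MeasurableSpace (Fin n → ∀ i, π i)))
    -- non-anticipating estimators: `θtilde i` is the estimator `θ̃_i`
    -- built from `X_1,…,X_i`, i.e. measurable with respect to `F i`
    (θtilde : ℕ → Ω → Θ)
    (hθtilde : ∀ i, @Measurable Ω Θ (F i) _ (θtilde i)) :
    -- nonnegativity
    (∀ n ω, 0 ≤ (safeDiv
        (∏ i ∈ Finset.range n, compLik μ α β γ (p (θtilde i ω)) (X i ω))
        (∏ i ∈ Finset.range n, compLik μ α β γ (p θstar) (X i ω))).toReal) ∧
    -- adaptedness to the natural filtration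
    (∀ n, @Measurable Ω ℝ (F n) _ (fun ω => (safeDiv
        (∏ i ∈ Finset.range n, compLik μ α β γ (p (θtilde i ω)) (X i ω))
        (∏ i ∈ Finset.range n, compLik μ α β γ (p θstar) (X i ω))).toReal)) ∧
    -- integrability
    (∀ n, Integrable (fun ω => (safeDiv
        (∏ i ∈ Finset.range n, compLik μ α β γ (p (θtilde i ω)) (X i ω))
        (∏ i ∈ Finset.range n, compLik μ α β γ (p θstar) (X i ω))).toReal) Pr) ∧
    -- the supermartingale property `E[M_n^* | F_{n-1}] ≤ M_{n-1}^*` a.s. for `n ≥ 1`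
    (∀ n : ℕ, 0 < n →
      Pr[(fun ω => (safeDiv
          (∏ i ∈ Finset.range n, compLik μ α β γ (p (θtilde i ω)) (X i ω))
          (∏ i ∈ Finset.range n, compLik μ α β γ (p θstar) (X i ω))).toReal) |
        F (n - 1)]
      ≤ᵐ[Pr] fun ω => (safeDiv
          (∏ i ∈ Finset.range (n - 1), compLik μ α β γ (p (θtilde i ω)) (X i ω))
          (∏ i ∈ Finset.range (n - 1), compLik μ α β γ (p θstar) (X i ω))).toReal) := by
  obtain rfl : F = pastFiltration X hX := funext hF
  have hM := running_CL_ratio_supermartingale_general μ hp_meas (fun θ => (hp_prob θ).le)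
    hα hβ hγ hγpos (fun n => measurable_comap_fin n.lt_succ_self)
    (indep_pastFiltration hX hiid) hlaw hθtilde
  exact ⟨fun _ _ => ENNReal.toReal_nonneg, fun n => (hM.stronglyMeasurable n).measurable,
    hM.integrable, fun n _ => hM.condExp_ae_le n.pred_le⟩
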